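/- arXiv:1801.00431 — 4 statements merged into one kernel-verified Lean document; each statement's English description precedes it below -/
import Mathlib

section
/- For all real numbers c > 0 and d > 0, ∫₀^c x e^{-x - d/x} dx = Σ_{i=0}^∞ ((-1)^i c^{i+2} / i!) · Ei(i+3, d/c), where the series on the right converges. -/
open MeasureTheory Real

/-- Generalized exponential integral `Ei(n, s) = ∫₁^∞ e^{-s t} t^{-n} dt`. -/
noncomputable def Ei (n : ℕ) (s : ℝ) : ℝ :=
  ∫ t in Set.Ioi (1 : ℝ), Real.exp (-s * t) / t ^ n

/-!
Expand `e^{-x}` in its power series and integrate term by term against `x e^{-d/x}`, which is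
bounded between `0` and `c` because `d/x ≥ 0` there. The substitution `x = c / t` turns each
moment `∫₀^c x^k e^{-d/x} dx` into `c^{k+1} Ei(k + 2, d/c)`.
-/

section

variable {E : Type*} [NormedAddCommGroup E] [NormedSpace ℝ E]

theorem integral_zero_inv_eq_integral_Ioi {a : ℝ} (ha : 0 < a) (f : ℝ → E) :
    ∫ x in (0 : ℝ)..a⁻¹, f x = ∫ t in Set.Ioi a, (t ^ 2)⁻¹ • f t⁻¹ := by
  have hderiv : ∀ t ∈ Set.Ioi a, HasDerivWithinAt (·⁻¹) (-(t ^ 2)⁻¹) (Set.Ioi a) t :=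
    fun t ht ↦ hasDerivWithinAt_inv (ha.trans ht).ne' _
  rw [intervalIntegral.integral_of_le (inv_pos.2 ha).le, integral_Ioc_eq_integral_Ioo,
    ← Set.inv_Ioi₀ ha, ← Set.image_inv_eq_inv,
    integral_image_eq_integral_abs_deriv_smul measurableSet_Ioi hderiv inv_injective.injOn]
  simp only [abs_neg, abs_inv, abs_pow, sq_abs]

theorem hasSum_integral_powerSeries_smul {μ : Measure ℝ} {c : ℝ} {a : ℕ → ℝ} {f : ℝ → ℝ}
    {g : ℝ → E} (ha : Summable fun i ↦ |a i| * |c| ^ i)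
    (hf : ∀ x ∈ Set.uIoc 0 c, HasSum (fun i ↦ a i * x ^ i) (f x))
    (hg : IntervalIntegrable g μ 0 c) :
    HasSum (fun i ↦ a i • ∫ x in (0 : ℝ)..c, x ^ i • g x ∂μ) (∫ x in (0 : ℝ)..c, f x • g x ∂μ) := by
  simp only [← intervalIntegral.integral_smul, smul_smul]
  refine intervalIntegral.hasSum_integral_of_dominated_convergence
    (fun i x ↦ |a i| * |c| ^ i * ‖g x‖) (fun i ↦ ?_) (fun i ↦ ae_of_all _ fun x hx ↦ ?_)
    (ae_of_all _ fun x _ ↦ ha.mul_right _) ?_ (ae_of_all _ fun x hx ↦ (hf x hx).smul_const _)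
  · have hpow : Continuous fun x : ℝ ↦ a i * x ^ i := by fun_prop
    exact hpow.aestronglyMeasurable.smul hg.def'.aestronglyMeasurable
  · have hxc : |x| ≤ |c| := by
      simpa only [sub_zero] using Set.abs_sub_left_of_mem_uIcc (Set.uIoc_subset_uIcc hx)
    rw [norm_smul, norm_mul, norm_pow, norm_eq_abs, norm_eq_abs]
    gcongr
  · simp only [tsum_mul_right]
    exact hg.norm.const_mul _

end

theorem hasSum_pow_div_factorial_mul_pow (a x : ℝ) :
    HasSum (fun i : ℕ ↦ a ^ i / i.factorial * x ^ i) (exp (a * x)) := by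
  simpa only [mul_pow, div_mul_eq_mul_div, ← exp_eq_exp_ℝ] using
    NormedSpace.expSeries_div_hasSum_exp (a * x)

theorem div_nonneg_of_mem_uIoc_zero {c d x : ℝ} (hcd : 0 ≤ c * d) (hx : x ∈ Set.uIoc 0 c) :
    0 ≤ d / x := by
  rcases Set.mem_uIoc.1 hx with ⟨hx_pos, hxc⟩ | ⟨hcx, hx_nonpos⟩
  · exact div_nonneg (nonneg_of_mul_nonneg_right hcd (hx_pos.trans_le hxc)) hx_pos.le
  · exact div_nonneg_of_nonpos (nonpos_of_mul_nonneg_right hcd (hcx.trans_le hx_nonpos)) hx_nonpos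

theorem intervalIntegrable_exp_neg_div {c d : ℝ} (hcd : 0 ≤ c * d) :
    IntervalIntegrable (fun x ↦ exp (-d / x)) volume 0 c := by
  have hmeas : Measurable fun x : ℝ ↦ exp (-d / x) := by fun_prop
  refine (intervalIntegrable_const (c := (1 : ℝ))).mono_fun hmeas.aestronglyMeasurable ?_
  filter_upwards [ae_restrict_mem measurableSet_uIoc] with x hx
  rw [norm_one, norm_of_nonneg (exp_pos _).le, exp_le_one_iff, neg_div, neg_nonpos]
  exact div_nonneg_of_mem_uIoc_zero hcd hx

theorem integral_pow_mul_exp_neg_div (c d : ℝ) (k : ℕ) :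
    ∫ x in (0 : ℝ)..c, x ^ k * exp (-d / x) = c ^ (k + 1) * Ei (k + 2) (d / c) := by
  have hsubst (t : ℝ) : (t ^ 2)⁻¹ • ((c * t⁻¹) ^ k * exp (-d / (c * t⁻¹))) =
      c ^ k * (exp (-(d / c) * t) / t ^ (k + 2)) := by
    have hexp : -d / (c * t⁻¹) = -(d / c) * t := by
      rw [← div_eq_mul_inv, div_div_eq_mul_div, neg_mul, neg_mul, neg_div, div_mul_eq_mul_div]
    rw [hexp, smul_eq_mul]
    ring
  calc ∫ x in (0 : ℝ)..c, x ^ k * exp (-d / x)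
      = c • ∫ x in (0 : ℝ)..1⁻¹, (c * x) ^ k * exp (-d / (c * x)) := by
        rw [intervalIntegral.smul_integral_comp_mul_left (fun x ↦ x ^ k * exp (-d / x)),
          mul_zero, inv_one, mul_one]
    _ = c • ∫ t in Set.Ioi 1, c ^ k * (exp (-(d / c) * t) / t ^ (k + 2)) := by
        simp only [integral_zero_inv_eq_integral_Ioi one_pos, hsubst]
    _ = c ^ (k + 1) * Ei (k + 2) (d / c) := by
        rw [integral_const_mul, smul_eq_mul, ← mul_assoc, ← pow_succ', Ei]

theorem stmt_3_general {c d : ℝ} (hcd : 0 ≤ c * d) (a : ℝ) (n : ℕ) :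
    HasSum (fun i : ℕ ↦ a ^ i * c ^ (i + n + 1) / i.factorial * Ei (i + n + 2) (d / c))
      (∫ x in (0 : ℝ)..c, x ^ n * exp (a * x - d / x)) := by
  have hcoeff : Summable fun i : ℕ ↦ |a ^ i / i.factorial| * |c| ^ i := by
    simpa only [abs_mul, abs_pow] using (hasSum_pow_div_factorial_mul_pow a c).summable.abs
  have hweight : IntervalIntegrable (fun x ↦ x ^ n * exp (-d / x)) volume 0 c :=
    (intervalIntegrable_exp_neg_div hcd).continuousOn_mul (by fun_prop)
  have hsum := hasSum_integral_powerSeries_smul hcoeff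
    (fun x _ ↦ hasSum_pow_div_factorial_mul_pow a x) hweight
  convert! hsum using 1
  · ext i
    simp only [smul_eq_mul, ← mul_assoc, ← pow_add, integral_pow_mul_exp_neg_div]
    ring
  · congr 1 with x
    rw [sub_eq_add_neg, exp_add, neg_div, smul_eq_mul, mul_left_comm]

theorem stmt_3 (c d : ℝ) (hc : 0 < c) (hd : 0 < d) :
    Summable (fun i : ℕ =>
      (-1 : ℝ) ^ i * c ^ (i + 2) / (Nat.factorial i) * Ei (i + 3) (d / c)) ∧
    ∫ x in (0 : ℝ)..c, x * Real.exp (-x - d / x)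
      = ∑' i : ℕ, (-1 : ℝ) ^ i * c ^ (i + 2) / (Nat.factorial i) * Ei (i + 3) (d / c) := by
  have hsum := stmt_3_general (mul_pos hc hd).le (-1) 1
  simp only [pow_one, neg_one_mul] at hsum
  exact ⟨hsum.summable, hsum.tsum_eq.symm⟩
end

section
/- For all real numbers λ > 0, φ > 0 and ϱ > 0, the iterated integral ∫₀^λ ∫₀^{ϱ/(φx)} e^{-x - y} dy dx equals 1 - e^{-λ} - Σ_{i=0}^∞ ((-1)^i λ^{i+1} / i!) · Ei(i+2, ϱ/(λφ)), where the series converges. -/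
open MeasureTheory Real

/-!
Integrating out `y` turns the double integral into `1 - e^{-λ} - ∫₀^λ e^{-x - r/x} dx` with
`r = ϱ/φ`. The substitution `x = λ/t` maps `(1, ∞)` onto `(0, λ)` and rewrites the remaining
integral as `λ ∫₁^∞ e^{-(r/λ) t} t⁻² e^{-λ/t} dt`. There `λ/t` is bounded, so the power series of
`e^{-λ/t}` may be integrated term by term, and each term is an exponential integral.
-/

open Set

theorem hasSum_integral_mul_pow_div_factorial {α : Type*} [MeasurableSpace α] {μ : Measure α}
    {w f : α → ℝ} {C : ℝ} (hw : Integrable w μ) (hf : AEStronglyMeasurable f μ)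
    (hfC : ∀ᵐ x ∂μ, |f x| ≤ C) :
    HasSum (fun i : ℕ => ∫ x, w x * (f x ^ i / i.factorial) ∂μ) (∫ x, w x * exp (f x) ∂μ) := by
  refine hasSum_integral_of_dominated_convergence (fun i x => |w x| * (C ^ i / i.factorial))
    (fun i => hw.aestronglyMeasurable.mul ((hf.pow i).mul_const _)) (fun i => ?_)
    (.of_forall fun x => (summable_pow_div_factorial C).mul_left _) ?_ (.of_forall fun x => ?_)
  · filter_upwards [hfC] with x hx
    rw [norm_mul, norm_div, norm_pow, norm_natCast, norm_eq_abs, norm_eq_abs]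
    gcongr
  · simp only [tsum_mul_left]
    exact hw.abs.mul_const _
  · rw [exp_eq_exp_ℝ]
    exact (NormedSpace.expSeries_div_hasSum_exp (f x)).mul_left _

theorem integrableOn_exp_neg_mul_div_pow {s : ℝ} (hs : 0 < s) (n : ℕ) :
    IntegrableOn (fun t => exp (-s * t) / t ^ n) (Ioi 1) := by
  simp only [div_eq_mul_inv]
  refine (exp_neg_integrableOn_Ioi 1 hs).mul_bdd (c := 1)
    (Measurable.aestronglyMeasurable (by fun_prop)) ?_
  filter_upwards [ae_restrict_mem measurableSet_Ioi] with t ht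
  rw [norm_inv, norm_pow]
  exact inv_le_one_of_one_le₀ (one_le_pow₀ (ht.le.trans (le_norm_self t)))

theorem hasSum_pow_div_factorial_mul_Ei {s : ℝ} (hs : 0 < s) (c : ℝ) (n : ℕ) :
    HasSum (fun i : ℕ => c ^ i / i.factorial * Ei (i + n) s)
      (∫ t in Ioi 1, exp (-s * t) / t ^ n * exp (c / t)) := by
  have abs_div_le : ∀ᵐ t ∂volume.restrict (Ioi (1 : ℝ)), |c / t| ≤ |c| := by
    filter_upwards [ae_restrict_mem measurableSet_Ioi] with t ht
    rw [abs_div]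
    exact div_le_self (abs_nonneg c) (ht.le.trans (le_abs_self t))
  convert hasSum_integral_mul_pow_div_factorial (integrableOn_exp_neg_mul_div_pow hs n)
    (Measurable.aestronglyMeasurable (by fun_prop)) abs_div_le using 2 with i
  rw [Ei, ← integral_const_mul]
  congr with t
  rw [div_pow, pow_add]
  ring

theorem image_const_div_Ioi_of_pos {𝕜 : Type*} [Field 𝕜] [LinearOrder 𝕜] [IsStrictOrderedRing 𝕜]
    {a b : 𝕜} (ha : 0 < a) (hb : 0 < b) : (fun t => a / t) '' Ioi b = Ioo 0 (a / b) := by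
  ext x
  constructor
  · rintro ⟨t, ht, rfl⟩
    exact ⟨div_pos ha (hb.trans ht), div_lt_div_of_pos_left ha hb ht⟩
  · rintro ⟨hx, hxab⟩
    exact ⟨a / x, (lt_div_comm₀ hx hb).1 hxab, div_div_cancel₀ ha.ne'⟩

theorem integral_Ioo_zero_div_eq_integral_Ioi {E : Type*} [NormedAddCommGroup E] [NormedSpace ℝ E]
    {a b : ℝ} (ha : 0 < a) (hb : 0 < b) (f : ℝ → E) :
    ∫ x in Ioo 0 (a / b), f x = ∫ t in Ioi b, (a / t ^ 2) • f (a / t) := by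
  have hderiv : ∀ t ∈ Ioi b, HasDerivWithinAt (fun t => a / t) (-(a / t ^ 2)) (Ioi b) t := by
    intro t ht
    simpa only [div_eq_mul_inv, mul_neg] using
      ((hasDerivAt_inv (hb.trans ht).ne').const_mul a).hasDerivWithinAt
  have hanti : AntitoneOn (fun t => a / t) (Ioi b) := fun t ht u _ htu =>
    div_le_div_of_nonneg_left ha.le (hb.trans ht) htu
  rw [← image_const_div_Ioi_of_pos ha hb,
    integral_image_eq_integral_deriv_smul_of_antitoneOn measurableSet_Ioi hderiv hanti]
  simp only [neg_neg]

theorem hasSum_integral_exp_neg_sub_div {l r : ℝ} (hl : 0 < l) (hr : 0 < r) :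
    HasSum (fun i : ℕ => (-1) ^ i * l ^ (i + 1) / i.factorial * Ei (i + 2) (r / l))
      (∫ x in 0..l, exp (-x - r / x)) := by
  have substitution : ∫ x in 0..l, exp (-x - r / x)
      = l * ∫ t in Ioi 1, exp (-(r / l) * t) / t ^ 2 * exp (-l / t) := by
    rw [intervalIntegral.integral_of_le hl.le, integral_Ioc_eq_integral_Ioo, ← div_one l,
      integral_Ioo_zero_div_eq_integral_Ioi hl one_pos, div_one, ← integral_const_mul]
    congr with t
    rw [smul_eq_mul, sub_eq_neg_add, exp_add, div_div_eq_mul_div, neg_div]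
    ring_nf
  rw [substitution]
  convert! (hasSum_pow_div_factorial_mul_Ei (div_pos hr hl) (-l) 2).mul_left l using 2 with i
  rw [neg_pow]
  ring

theorem intervalIntegrable_exp_neg_sub {a b : ℝ} {u : ℝ → ℝ} (hu : Measurable u)
    (hu_nonneg : ∀ x ∈ uIoc a b, 0 ≤ u x) :
    IntervalIntegrable (fun x => exp (-x - u x)) volume a b := by
  have hexp : IntervalIntegrable (fun x => exp (-x)) volume a b :=
    Continuous.intervalIntegrable (by fun_prop) a b
  refine hexp.mono_fun (Measurable.aestronglyMeasurable (by fun_prop)) ?_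
  filter_upwards [ae_restrict_mem measurableSet_uIoc] with x hx
  rw [norm_of_nonneg (exp_nonneg _), norm_of_nonneg (exp_nonneg _)]
  exact exp_le_exp.2 (sub_le_self _ (hu_nonneg x hx))

theorem integral_integral_exp_neg_sub {a b : ℝ} {u : ℝ → ℝ} (hu : Measurable u)
    (hu_nonneg : ∀ x ∈ uIoc a b, 0 ≤ u x) :
    ∫ x in a..b, ∫ y in 0..u x, exp (-x - y)
      = exp (-a) - exp (-b) - ∫ x in a..b, exp (-x - u x) := by
  have inner (x : ℝ) : ∫ y in 0..u x, exp (-x - y) = exp (-x) - exp (-x - u x) := by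
    rw [intervalIntegral.integral_comp_sub_left exp, integral_exp, sub_zero]
  have outer : ∫ x in a..b, exp (-x) = exp (-a) - exp (-b) := by
    rw [intervalIntegral.integral_comp_neg exp, integral_exp]
  simp only [inner]
  rw [intervalIntegral.integral_sub (Continuous.intervalIntegrable (by fun_prop) a b)
    (intervalIntegrable_exp_neg_sub hu hu_nonneg), outer]

theorem stmt_5 (l φ ϱ : ℝ) (hl : 0 < l) (hφ : 0 < φ) (hϱ : 0 < ϱ) :
    Summable (fun i : ℕ =>
      (-1 : ℝ) ^ i * l ^ (i + 1) / (Nat.factorial i) * Ei (i + 2) (ϱ / (l * φ))) ∧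
    ∫ x in (0 : ℝ)..l, (∫ y in (0 : ℝ)..(ϱ / (φ * x)), Real.exp (-x - y))
      = 1 - Real.exp (-l)
        - ∑' i : ℕ, (-1 : ℝ) ^ i * l ^ (i + 1) / (Nat.factorial i) * Ei (i + 2) (ϱ / (l * φ)) := by
  have hr : 0 < ϱ / φ := div_pos hϱ hφ
  have hseries := hasSum_integral_exp_neg_sub_div hl hr
  have hdiv_nonneg : ∀ x ∈ uIoc 0 l, 0 ≤ ϱ / φ / x := fun x hx =>
    div_nonneg hr.le (uIoc_of_le hl.le ▸ hx).1.le
  simp only [mul_comm l φ, ← div_div]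
  refine ⟨hseries.summable, ?_⟩
  rw [hseries.tsum_eq, integral_integral_exp_neg_sub (by fun_prop) hdiv_nonneg, neg_zero, exp_zero]
end

section
/- For all real numbers λ > 0, φ > 0, θ, ψ, and 0 < ϱ < ϑ, the iterated integral ∫₀^λ ∫_{ϱ/(φx)}^{ϑ/(φx)} (1/2 - (ψ/√(2π))(φ x y - θ)) e^{-x - y} dy dx equals Σ_{i=0}^∞ ((-1)^i λ^{i+1} / i!) · [ (1/2 + ψ(θ-ϱ)/√(2π)) · Ei(i+2, ϱ/(λφ)) - (1/2 + ψ(θ-ϑ)/√(2π)) · Ei(i+2, ϑ/(λφ)) + (ψ φ λ/√(2π)) · ( Ei(i+3, ϑ/(λφ)) - Ei(i+3, ϱ/(λφ)) ) ], where the series converges. -/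
open MeasureTheory Real

/-!
For fixed `x` the inner integrand is an affine function of `y` times `e^{-y}`, so it has an
elementary antiderivative. The outer integrand becomes a difference of two terms
`e^{-x} (α + β x) e^{-p/x}`. Expanding `e^{-x}` in its power series and integrating term by term
leaves the integrals `∫₀^l x^m e^{-p/x} dx`, which the substitution `x = l / t` turns into
exponential integrals.
-/

section Substitution

variable {E : Type*} [NormedAddCommGroup E] [NormedSpace ℝ E] {l : ℝ}

lemma image_const_div_Ioi_one (hl : 0 < l) : (fun t : ℝ => l / t) '' Set.Ioi 1 = Set.Ioo 0 l := by
  ext x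
  constructor
  · rintro ⟨t, ht : 1 < t, rfl⟩
    exact ⟨by positivity, div_lt_self hl ht⟩
  · rintro ⟨hx0, hxl⟩
    exact ⟨l / x, (one_lt_div hx0).2 hxl, div_div_cancel₀ hl.ne'⟩

lemma integral_zero_eq_integral_Ioi_one_const_div (hl : 0 < l) (f : ℝ → E) :
    ∫ x in (0 : ℝ)..l, f x = ∫ t in Set.Ioi (1 : ℝ), (l / t ^ 2) • f (l / t) := by
  have hderiv : ∀ t ∈ Set.Ioi (1 : ℝ),
      HasDerivWithinAt (fun t : ℝ => l / t) (-(l / t ^ 2)) (Set.Ioi 1) t := by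
    intro t (ht : 1 < t)
    have ht0 : t ≠ 0 := by positivity
    simpa [div_eq_mul_inv] using ((hasDerivAt_inv ht0).const_mul l).hasDerivWithinAt
  have hinj : Set.InjOn (fun t : ℝ => l / t) (Set.Ioi 1) :=
    Set.LeftInvOn.injOn (f₁' := fun x => l / x) fun t _ => div_div_cancel₀ hl.ne'
  rw [intervalIntegral.integral_of_le hl.le, integral_Ioc_eq_integral_Ioo,
    ← image_const_div_Ioi_one hl,
    integral_image_eq_integral_abs_deriv_smul measurableSet_Ioi hderiv hinj]
  refine setIntegral_congr_fun measurableSet_Ioi fun t _ => ?_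
  have hpos : 0 ≤ l / t ^ 2 := by positivity
  simp only [abs_neg, abs_of_nonneg hpos]

-- For `p < 0` both integrals diverge, and the identity is between junk values `0`.
lemma integral_pow_mul_exp_neg_div_eq_Ei (hl : 0 < l) (p : ℝ) (m : ℕ) :
    ∫ x in (0 : ℝ)..l, x ^ m * exp (-(p / x)) = l ^ (m + 1) * Ei (m + 2) (p / l) := by
  rw [integral_zero_eq_integral_Ioi_one_const_div hl, Ei, ← integral_const_mul]
  refine setIntegral_congr_fun measurableSet_Ioi fun t (ht : 1 < t) => ?_
  have harg : p / (l / t) = p / l * t := by field_simp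
  simp only [smul_eq_mul, harg, neg_mul, div_pow]
  field_simp
  ring

end Substitution

lemma hasSum_integral_exp_mul {a b : ℝ} {f : ℝ → ℝ} (c : ℝ)
    (hf : IntervalIntegrable f volume a b) :
    HasSum (fun i : ℕ => c ^ i / i.factorial * ∫ x in a..b, x ^ i * f x)
      (∫ x in a..b, exp (c * x) * f x) := by
  have hexp (t : ℝ) : HasSum (fun i : ℕ => t ^ i / i.factorial) (exp t) := by
    rw [exp_eq_exp_ℝ]
    exact NormedSpace.expSeries_div_hasSum_exp t
  obtain ⟨M, hM⟩ : ∃ M, ∀ x ∈ Set.uIcc a b, ‖c * x‖ ≤ M :=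
    isCompact_uIcc.exists_bound_of_continuousOn (by fun_prop)
  simp_rw [← intervalIntegral.integral_const_mul]
  refine intervalIntegral.hasSum_integral_of_dominated_convergence
    (fun i x => M ^ i / i.factorial * ‖f x‖) (fun i => ?_) (fun i => ?_) ?_ ?_ ?_
  · have hf_meas := hf.aestronglyMeasurable_restrict_uIoc
    fun_prop
  · refine .of_forall fun x hx => ?_
    calc ‖c ^ i / i.factorial * (x ^ i * f x)‖ = ‖c * x‖ ^ i / i.factorial * ‖f x‖ := by
          simp only [norm_mul, norm_div, norm_pow, Real.norm_natCast]
          ring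
      _ ≤ M ^ i / i.factorial * ‖f x‖ := by gcongr; exact hM x (Set.uIoc_subset_uIcc hx)
  · exact .of_forall fun x _ => ((hexp M).mul_right ‖f x‖).summable
  · simp_rw [tsum_mul_right]
    exact hf.norm.const_mul _
  · refine .of_forall fun x _ => ((hexp (c * x)).mul_right (f x)).congr_fun ?_
    intro i
    ring

lemma intervalIntegrable_exp_neg_div_s7 {l p : ℝ} (hl : 0 ≤ l) (hp : 0 ≤ p) :
    IntervalIntegrable (fun x => exp (-(p / x))) volume 0 l := by
  refine (intervalIntegrable_const (c := (1 : ℝ))).mono_fun' (by fun_prop) ?_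
  rw [Set.uIoc_of_le hl]
  filter_upwards [ae_restrict_mem measurableSet_Ioc] with x hx
  have hx0 : 0 < x := hx.1
  rw [norm_of_nonneg (exp_pos _).le, exp_le_one_iff, neg_nonpos]
  positivity

lemma integral_pow_mul_affine_mul_exp_neg_div_eq_Ei {l p : ℝ} (hl : 0 < l) (hp : 0 ≤ p)
    (α β : ℝ) (i : ℕ) :
    ∫ x in (0 : ℝ)..l, x ^ i * ((α + β * x) * exp (-(p / x))) =
      l ^ (i + 1) * (α * Ei (i + 2) (p / l) + β * l * Ei (i + 3) (p / l)) := by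
  have hint (m : ℕ) : IntervalIntegrable (fun x => x ^ m * exp (-(p / x))) volume 0 l :=
    (intervalIntegrable_exp_neg_div_s7 hl.le hp).continuousOn_mul (by fun_prop)
  calc ∫ x in (0 : ℝ)..l, x ^ i * ((α + β * x) * exp (-(p / x)))
      = ∫ x in (0 : ℝ)..l,
          (α * (x ^ i * exp (-(p / x))) + β * (x ^ (i + 1) * exp (-(p / x)))) := by
        congr with x
        ring
    _ = α * (l ^ (i + 1) * Ei (i + 2) (p / l)) +
          β * (l ^ (i + 1 + 1) * Ei (i + 1 + 2) (p / l)) := by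
        rw [intervalIntegral.integral_add ((hint i).const_mul α) ((hint (i + 1)).const_mul β)]
        simp only [intervalIntegral.integral_const_mul, integral_pow_mul_exp_neg_div_eq_Ei hl]
    _ = l ^ (i + 1) * (α * Ei (i + 2) (p / l) + β * l * Ei (i + 3) (p / l)) := by ring

lemma intervalIntegrable_affine_mul_exp_neg_div {l p : ℝ} (hl : 0 ≤ l) (hp : 0 ≤ p) (α β : ℝ) :
    IntervalIntegrable (fun x => (α + β * x) * exp (-(p / x))) volume 0 l :=
  (intervalIntegrable_exp_neg_div_s7 hl hp).continuousOn_mul (by fun_prop)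

lemma hasSum_integral_exp_neg_mul_affine_mul_exp_neg_div {l p : ℝ} (hl : 0 < l) (hp : 0 ≤ p)
    (α β : ℝ) :
    HasSum (fun i : ℕ => (-1) ^ i * l ^ (i + 1) / i.factorial *
        (α * Ei (i + 2) (p / l) + β * l * Ei (i + 3) (p / l)))
      (∫ x in (0 : ℝ)..l, exp (-x) * ((α + β * x) * exp (-(p / x)))) := by
  have hsum := hasSum_integral_exp_mul (-1)
    (intervalIntegrable_affine_mul_exp_neg_div hl.le hp α β)
  simp only [integral_pow_mul_affine_mul_exp_neg_div_eq_Ei hl hp, neg_one_mul] at hsum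
  refine hsum.congr_fun fun i => ?_
  ring

lemma integral_affine_mul_exp_neg (a b u v : ℝ) :
    ∫ y in u..v, (a + b * y) * exp (-y) =
      (a + b * u + b) * exp (-u) - (a + b * v + b) * exp (-v) := by
  have hderiv : ∀ y ∈ Set.uIcc u v,
      HasDerivAt (fun y => -((a + b * y + b) * exp (-y))) ((a + b * y) * exp (-y)) y := by
    intro y _
    have haffine : HasDerivAt (fun y => a + b * y + b) b y := by
      simpa using (((hasDerivAt_id y).const_mul b).const_add a).add_const b
    refine (haffine.mul (hasDerivAt_neg y).exp).neg.congr_deriv ?_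
    ring
  rw [intervalIntegral.integral_eq_sub_of_hasDerivAt hderiv
    (Continuous.intervalIntegrable (by fun_prop) u v)]
  ring

lemma integral_div_affine_mul_exp_neg_sub {x : ℝ} (hx : x ≠ 0) (a b p q : ℝ) :
    ∫ y in (p / x)..(q / x), (a + b * (x * y)) * exp (-x - y) =
      exp (-x) * ((a + b * p + b * x) * exp (-(p / x))) -
        exp (-x) * ((a + b * q + b * x) * exp (-(q / x))) := by
  have hfactor (y : ℝ) :
      (a + b * (x * y)) * exp (-x - y) = exp (-x) * ((a + b * x * y) * exp (-y)) := by
    rw [sub_eq_add_neg, exp_add]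
    ring
  have hcancel (r : ℝ) : b * x * (r / x) = b * r := by field_simp
  simp only [hfactor, intervalIntegral.integral_const_mul, integral_affine_mul_exp_neg, hcancel,
    mul_sub]

theorem hasSum_integral_integral_affine_mul_exp_neg_sub {l p q : ℝ} (hl : 0 < l) (hp : 0 ≤ p)
    (hq : 0 ≤ q) (a b : ℝ) :
    HasSum (fun i : ℕ => (-1) ^ i * l ^ (i + 1) / i.factorial *
        ((a + b * p) * Ei (i + 2) (p / l) - (a + b * q) * Ei (i + 2) (q / l) +
          b * l * (Ei (i + 3) (p / l) - Ei (i + 3) (q / l))))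
      (∫ x in (0 : ℝ)..l, ∫ y in (p / x)..(q / x), (a + b * (x * y)) * exp (-x - y)) := by
  have hint {r : ℝ} (hr : 0 ≤ r) : IntervalIntegrable
      (fun x => exp (-x) * ((a + b * r + b * x) * exp (-(r / x)))) volume 0 l :=
    (intervalIntegrable_affine_mul_exp_neg_div hl.le hr _ _).continuousOn_mul (by fun_prop)
  rw [intervalIntegral.integral_congr_Ioo_of_le hl.le fun x hx =>
      integral_div_affine_mul_exp_neg_sub hx.1.ne' a b p q,
    intervalIntegral.integral_sub (hint hp) (hint hq)]
  refine ((hasSum_integral_exp_neg_mul_affine_mul_exp_neg_div hl hp (a + b * p) b).sub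
    (hasSum_integral_exp_neg_mul_affine_mul_exp_neg_div hl hq (a + b * q) b)).congr_fun fun i => ?_
  ring

theorem stmt_7 (l φ θ ψ ϱ ϑ : ℝ) (hl : 0 < l) (hφ : 0 < φ) (hϱ : 0 < ϱ) (hϱϑ : ϱ < ϑ) :
    Summable (fun i : ℕ =>
      (-1 : ℝ) ^ i * l ^ (i + 1) / (Nat.factorial i) *
        ((1 / 2 + ψ * (θ - ϱ) / Real.sqrt (2 * π)) * Ei (i + 2) (ϱ / (l * φ))
          - (1 / 2 + ψ * (θ - ϑ) / Real.sqrt (2 * π)) * Ei (i + 2) (ϑ / (l * φ))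
          + ψ * φ * l / Real.sqrt (2 * π) *
              (Ei (i + 3) (ϑ / (l * φ)) - Ei (i + 3) (ϱ / (l * φ))))) ∧
    ∫ x in (0 : ℝ)..l,
        (∫ y in (ϱ / (φ * x))..(ϑ / (φ * x)),
          (1 / 2 - ψ / Real.sqrt (2 * π) * (φ * x * y - θ)) * Real.exp (-x - y))
      = ∑' i : ℕ, (-1 : ℝ) ^ i * l ^ (i + 1) / (Nat.factorial i) *
          ((1 / 2 + ψ * (θ - ϱ) / Real.sqrt (2 * π)) * Ei (i + 2) (ϱ / (l * φ))
            - (1 / 2 + ψ * (θ - ϑ) / Real.sqrt (2 * π)) * Ei (i + 2) (ϑ / (l * φ))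
            + ψ * φ * l / Real.sqrt (2 * π) *
                (Ei (i + 3) (ϑ / (l * φ)) - Ei (i + 3) (ϱ / (l * φ)))) := by
  set c := ψ / √(2 * π) with hc
  have hweight (x y : ℝ) :
      1 / 2 - c * (φ * x * y - θ) = 1 / 2 + c * θ + -(c * φ) * (x * y) := by ring
  have hcoeff (r : ℝ) :
      1 / 2 + ψ * (θ - r) / √(2 * π) = 1 / 2 + c * θ + -(c * φ) * (r / φ) := by
    rw [hc]
    field_simp
    ring
  have hslope : ψ * φ * l / √(2 * π) = c * φ * l := by rw [hc]; ring
  have hsum := hasSum_integral_integral_affine_mul_exp_neg_sub hl (div_pos hϱ hφ).le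
    (div_pos (hϱ.trans hϱϑ) hφ).le (1 / 2 + c * θ) (-(c * φ))
  simp only [← hweight, div_div, mul_comm φ l] at hsum
  simp only [hcoeff, hslope]
  suffices h : HasSum _ _ from ⟨h.summable, h.tsum_eq.symm⟩
  refine hsum.congr_fun fun i => ?_
  ring
end

section
/- Let θ, ψ, φ be real numbers with ψ > 0 and φ > 0, set ϱ = θ - (1/ψ)√(π/2) and ϑ = θ + (1/ψ)√(π/2), and assume ϱ > 0. Define Ω(γ) = 1 for γ ≤ ϱ, Ω(γ) = 1/2 - (ψ/√(2π))(γ - θ) for ϱ < γ < ϑ, and Ω(γ) = 0 for γ ≥ ϑ, and define A(x) = ∫₀^∞ t^{-1} e^{-t - x/t} dt and B(x) = x ∫₀^∞ t^{-2} e^{-t - x/t} dt for x > 0. Then ∫₀^∞ Ω(φz) A(z) dz = 1 - (1/2)(1 + (2ψ/√(2π))(ϱ + φ - θ)) B(ϱ/φ) - (ψϱ/√(2π)) A(ϱ/φ) - (1/2)(1 - (2ψ/√(2π))(ϑ + φ - θ)) B(ϑ/φ) + (ψϑ/√(2π)) A(ϑ/φ). (This is the exact form of Theorem 1's infinite-battery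 outage expression: the left-hand side is the average of the linearized error probability Ω over the SNR γ = φ z, where z is the product of two independent unit-mean exponential channel gains, whose density is A(z) = 2K₀(2√z); in Bessel notation the right-hand side is 1 - √(ϱ/φ)[1 + (2ψ/√(2π))(ϱ+φ-θ)]K₁(2√(ϱ/φ)) - (2ψϱ/√(2π))K₀(2√(ϱ/φ)) - √(ϑ/φ)[1 - (2ψ/√(2π))(ϑ+φ-θ)]K₁(2√(ϑ/φ)) + (2ψϑ/√(2π))K₀(2√(ϑ/φ)).) -/
open MeasureTheory Real

/-- Piecewise-linear approximation `Ω` of the finite-blocklength error probability,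
with parameters `ψ, θ` and breakpoints `ϱ < ϑ`. -/
noncomputable def Omega (ψ θ ϱ ϑ γ : ℝ) : ℝ :=
  if γ ≤ ϱ then 1
  else if γ < ϑ then 1 / 2 - ψ / Real.sqrt (2 * π) * (γ - θ)
  else 0

/-- `A x = ∫₀^∞ t⁻¹ e^{-t - x/t} dt` (the integral representation of `2K₀(2√x)`). -/
noncomputable def A (x : ℝ) : ℝ :=
  ∫ t in Set.Ioi (0 : ℝ), t⁻¹ * Real.exp (-t - x / t)

/-- `B x = x ∫₀^∞ t⁻² e^{-t - x/t} dt` (the integral representation of `2√x K₁(2√x)`). -/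
noncomputable def B (x : ℝ) : ℝ :=
  x * ∫ t in Set.Ioi (0 : ℝ), t ^ (-2 : ℤ) * Real.exp (-t - x / t)

/-!
The breakpoints are placed so that `Ω` is continuous; hence it is a difference of two hinges,
`Ω γ = ψ / √(2π) * ((ϑ - γ)⁺ - (ϱ - γ)⁺)`, and it suffices to integrate one hinge `(a - z)⁺`
against the density `A`. Conditionally on one channel gain `t`, the product `z` is exponential
with mean `t`, so by Fubini the hinge integral is `∫ (a - t + t e^{-a/t}) e^{-t} dt`. This is
expressed through `A a` and `B a` by the recurrence `I_ν = ν I_{ν-1} + a I_{ν-2}` for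
`I_ν = ∫ t ^ ν e^{-t - a/t} dt`, an integration by parts taken at `ν = 0` and `ν = 1`.
-/

open Set Filter Topology

/-- The integrand `t ^ ν * e^{-t - a/t}` of the integral representation of `K_{ν+1}`. At `a = 0` it
is the integrand of the Gamma function at `ν + 1`. -/
noncomputable def besselKernel (ν a t : ℝ) : ℝ :=
  t ^ ν * exp (-t - a / t)

/-- The integral `∫₀^∞ t ^ ν e^{-t - a/t} dt`, which is `2 a ^ ((ν+1)/2) K_{ν+1}(2√a)` for `a > 0`;
`A` and `B` are the cases `ν = -1` and, up to a factor, `ν = -2`. -/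
noncomputable def besselIntegral (ν a : ℝ) : ℝ :=
  ∫ t in Ioi (0 : ℝ), besselKernel ν a t

lemma integral_Ioi_of_hasDerivAt_of_tendsto_nhdsGT {E : Type*} [NormedAddCommGroup E]
    [NormedSpace ℝ E] [CompleteSpace E] {f f' : ℝ → E} {a : ℝ} {l m : E}
    (hderiv : ∀ x ∈ Ioi a, HasDerivAt f (f' x) x) (f'int : IntegrableOn f' (Ioi a))
    (hleft : Tendsto f (𝓝[>] a) (𝓝 l)) (htop : Tendsto f atTop (𝓝 m)) :
    ∫ x in Ioi a, f' x = m - l := by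
  have hcont : ContinuousWithinAt (Function.update f a l) (Ici a) a := by
    rwa [continuousWithinAt_update_same, Ici_sdiff_left]
  have heq {x : ℝ} (hx : x ∈ Ioi a) : Function.update f a l =ᶠ[𝓝 x] f :=
    eventuallyEq_of_mem (Ioi_mem_nhds hx) fun y hy => Function.update_of_ne (ne_of_gt hy) l f
  have htop' : Tendsto (Function.update f a l) atTop (𝓝 m) := by
    refine htop.congr' ?_
    filter_upwards [eventually_ne_atTop a] with x hx
    exact (Function.update_of_ne hx l f).symm
  simpa using integral_Ioi_of_hasDerivAt_of_tendsto hcont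
    (fun x hx => (hderiv x hx).congr_of_eventuallyEq (heq hx)) f'int htop'

section BesselKernel

open scoped Nat

variable {a t ν : ℝ}

lemma besselKernel_nonneg (ht : 0 ≤ t) : 0 ≤ besselKernel ν a t := by
  unfold besselKernel
  positivity

lemma besselKernel_zero_right (ν t : ℝ) : besselKernel ν 0 t = t ^ ν * exp (-t) := by
  simp only [besselKernel, zero_div, sub_zero]

lemma measurable_besselKernel (ν a : ℝ) : Measurable (besselKernel ν a) := by
  unfold besselKernel
  fun_prop

lemma exp_neg_div_le_factorial_div_pow_mul_pow (ha : 0 < a) (ht : 0 < t) (n : ℕ) :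
    exp (-(a / t)) ≤ n ! / a ^ n * t ^ n := by
  have hpos : 0 < (a / t) ^ n / n ! := by positivity
  calc exp (-(a / t)) = (exp (a / t))⁻¹ := exp_neg _
    _ ≤ ((a / t) ^ n / n !)⁻¹ := inv_anti₀ hpos (pow_div_factorial_le_exp _ (by positivity) n)
    _ = n ! / a ^ n * t ^ n := by rw [div_pow]; field_simp

lemma besselKernel_le (ha : 0 < a) (ht : 0 < t) (ν : ℝ) (n : ℕ) :
    besselKernel ν a t ≤ n ! / a ^ n * besselKernel (ν + n) 0 t := by
  calc besselKernel ν a t = t ^ ν * exp (-t) * exp (-(a / t)) := by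
        rw [besselKernel, sub_eq_add_neg, exp_add, mul_assoc]
    _ ≤ t ^ ν * exp (-t) * (n ! / a ^ n * t ^ n) := by
        gcongr
        exact exp_neg_div_le_factorial_div_pow_mul_pow ha ht n
    _ = n ! / a ^ n * besselKernel (ν + n) 0 t := by
        rw [besselKernel_zero_right, rpow_add_natCast ht.ne']; ring

lemma exists_besselKernel_le_const_mul (ha : 0 < a) (ν : ℝ) :
    ∃ C μ, 0 < μ ∧ ∀ t > 0, besselKernel ν a t ≤ C * besselKernel μ 0 t := by
  obtain ⟨n, hn⟩ := exists_nat_gt (-ν)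
  exact ⟨n ! / a ^ n, ν + n, by linarith, fun t ht => besselKernel_le ha ht ν n⟩

lemma integrableOn_besselKernel_zero_right (hν : -1 < ν) :
    IntegrableOn (besselKernel ν 0) (Ioi 0) := by
  refine (GammaIntegral_convergent (s := ν + 1) (by linarith)).congr_fun (fun t _ => ?_)
    measurableSet_Ioi
  rw [besselKernel_zero_right, add_sub_cancel_right, mul_comm]

lemma besselIntegral_zero_right (hν : -1 < ν) : besselIntegral ν 0 = Gamma (ν + 1) := by
  rw [Gamma_eq_integral (by linarith), besselIntegral]
  simp only [besselKernel_zero_right, add_sub_cancel_right, mul_comm]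

lemma integrableOn_besselKernel (ha : 0 < a) (ν : ℝ) :
    IntegrableOn (besselKernel ν a) (Ioi 0) := by
  obtain ⟨C, μ, hμ, hle⟩ := exists_besselKernel_le_const_mul ha ν
  refine ((integrableOn_besselKernel_zero_right (by linarith)).const_mul C).mono'
    (measurable_besselKernel ν a).aestronglyMeasurable ?_
  filter_upwards [ae_restrict_mem measurableSet_Ioi] with t ht
  rw [norm_of_nonneg (besselKernel_nonneg (le_of_lt ht))]
  exact hle t ht

lemma tendsto_besselKernel_nhdsGT_zero (ha : 0 < a) (ν : ℝ) :
    Tendsto (besselKernel ν a) (𝓝[>] 0) (𝓝 0) := by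
  obtain ⟨C, μ, hμ, hle⟩ := exists_besselKernel_le_const_mul ha ν
  have hdom : Tendsto (fun t => C * besselKernel μ 0 t) (𝓝[>] 0) (𝓝 0) := by
    have hcont : Continuous fun t : ℝ => C * besselKernel μ 0 t := by
      simp only [besselKernel_zero_right]
      exact continuous_const.mul ((continuous_rpow_const hμ.le).mul (by fun_prop))
    have hzero : C * besselKernel μ 0 0 = 0 := by
      rw [besselKernel_zero_right, zero_rpow hμ.ne', zero_mul, mul_zero]
    simpa only [hzero] using (hcont.tendsto 0).mono_left nhdsWithin_le_nhds
  refine squeeze_zero' ?_ ?_ hdom <;> filter_upwards [self_mem_nhdsWithin] with t ht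
  · exact besselKernel_nonneg (le_of_lt ht)
  · exact hle t ht

lemma tendsto_besselKernel_atTop (ha : 0 < a) (ν : ℝ) :
    Tendsto (besselKernel ν a) atTop (𝓝 0) := by
  obtain ⟨C, μ, -, hle⟩ := exists_besselKernel_le_const_mul ha ν
  have hdom : Tendsto (fun t => C * besselKernel μ 0 t) atTop (𝓝 0) := by
    simpa [besselKernel_zero_right] using
      (tendsto_rpow_mul_exp_neg_mul_atTop_nhds_zero μ 1 one_pos).const_mul C
  refine squeeze_zero' ?_ ?_ hdom <;> filter_upwards [eventually_gt_atTop 0] with t ht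
  · exact besselKernel_nonneg ht.le
  · exact hle t ht

lemma hasDerivAt_besselKernel (ht : 0 < t) (ν a : ℝ) :
    HasDerivAt (besselKernel ν a)
      (ν * besselKernel (ν - 1) a t - besselKernel ν a t + a * besselKernel (ν - 2) a t) t := by
  have hpow : HasDerivAt (fun t : ℝ => t ^ ν) (ν * t ^ (ν - 1)) t :=
    hasDerivAt_rpow_const (Or.inl ht.ne')
  have hexponent : HasDerivAt (fun t : ℝ => -t - a / t) (-1 - a * -(t ^ 2)⁻¹) t :=
    (hasDerivAt_neg t).sub ((hasDerivAt_inv ht.ne').const_mul a)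
  have htwo : t ^ (ν - 2) = t ^ ν * (t ^ 2)⁻¹ := by
    rw [rpow_sub ht, rpow_two, div_eq_mul_inv]
  refine (hpow.mul hexponent.exp).congr_deriv ?_
  simp only [besselKernel, htwo]
  ring

lemma besselIntegral_recurrence (ha : 0 < a) (ν : ℝ) :
    besselIntegral ν a = ν * besselIntegral (ν - 1) a + a * besselIntegral (ν - 2) a := by
  have hint₀ := integrableOn_besselKernel ha ν
  have hint₁ := (integrableOn_besselKernel ha (ν - 1)).const_mul ν
  have hint₂ := (integrableOn_besselKernel ha (ν - 2)).const_mul a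
  have hint₁₀ : IntegrableOn (fun t => ν * besselKernel (ν - 1) a t - besselKernel ν a t)
      (Ioi 0) := hint₁.sub hint₀
  have hderiv_int : ∫ t in Ioi 0, (ν * besselKernel (ν - 1) a t - besselKernel ν a t
      + a * besselKernel (ν - 2) a t) = 0 - 0 :=
    integral_Ioi_of_hasDerivAt_of_tendsto_nhdsGT
      (fun t ht => hasDerivAt_besselKernel ht ν a) (hint₁₀.add hint₂)
      (tendsto_besselKernel_nhdsGT_zero ha ν) (tendsto_besselKernel_atTop ha ν)
  rw [integral_add hint₁₀ hint₂, integral_sub hint₁ hint₀, integral_const_mul,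
    integral_const_mul] at hderiv_int
  simp only [besselIntegral]
  linarith

end BesselKernel

lemma A_eq_besselIntegral (a : ℝ) : A a = besselIntegral (-1) a := by
  simp only [A, besselIntegral, besselKernel, rpow_neg_one]

lemma B_eq_mul_besselIntegral (a : ℝ) : B a = a * besselIntegral (-2) a := by
  simp only [B, besselIntegral, besselKernel, ← rpow_intCast, Int.cast_neg, Int.cast_ofNat]

lemma besselIntegral_zero_eq_B {a : ℝ} (ha : 0 < a) : besselIntegral 0 a = B a := by
  rw [besselIntegral_recurrence ha, B_eq_mul_besselIntegral, zero_mul, zero_add, zero_sub]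

lemma besselIntegral_one_eq {a : ℝ} (ha : 0 < a) : besselIntegral 1 a = B a + a * A a := by
  rw [besselIntegral_recurrence ha, A_eq_besselIntegral, ← besselIntegral_zero_eq_B ha]
  norm_num

section Hinge

variable {a t : ℝ}

lemma hinge_mul_eq_indicator (a : ℝ) (f : ℝ → ℝ) :
    (fun z => max (a - z) 0 * f z) = (Iic a).indicator fun z => (a - z) * f z := by
  ext z
  rcases le_or_gt z a with hz | hz
  · rw [indicator_of_mem (mem_Iic.2 hz), max_eq_left (sub_nonneg.2 hz)]
  · rw [indicator_of_notMem (notMem_Iic.2 hz), max_eq_right (sub_nonpos.2 hz.le), zero_mul]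

lemma integrableOn_hinge_mul {f : ℝ → ℝ} (hf : Continuous f) (a b : ℝ) :
    IntegrableOn (fun z => max (a - z) 0 * f z) (Ioi b) := by
  rw [hinge_mul_eq_indicator, IntegrableOn, integrable_indicator_iff measurableSet_Iic,
    IntegrableOn, Measure.restrict_restrict measurableSet_Iic, Iic_inter_Ioi]
  exact (Continuous.integrableOn_Icc (by fun_prop)).mono_set Ioc_subset_Icc_self

lemma integral_Ioi_hinge_mul {b : ℝ} (hba : b ≤ a) (f : ℝ → ℝ) :
    ∫ z in Ioi b, max (a - z) 0 * f z = ∫ z in b..a, (a - z) * f z := by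
  rw [hinge_mul_eq_indicator, integral_indicator measurableSet_Iic,
    Measure.restrict_restrict measurableSet_Iic, Iic_inter_Ioi,
    intervalIntegral.integral_of_le hba]

lemma hasDerivAt_hinge_primitive (ht : t ≠ 0) (a z : ℝ) :
    HasDerivAt (fun z => (t - (a - z)) * exp (-t - z / t))
      ((a - z) * (t⁻¹ * exp (-t - z / t))) z := by
  have hlin : HasDerivAt (fun z => t - (a - z)) 1 z := by
    simpa using ((hasDerivAt_id z).const_sub a).const_sub t
  have hexponent : HasDerivAt (fun z => -t - z / t) (-(1 / t)) z :=
    ((hasDerivAt_id z).div_const t).const_sub (-t)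
  refine (hlin.mul hexponent.exp).congr_deriv ?_
  field_simp
  ring

lemma integral_hinge_mul_exp (ha : 0 ≤ a) (ht : t ≠ 0) :
    ∫ z in Ioi (0 : ℝ), max (a - z) 0 * (t⁻¹ * exp (-t - z / t))
      = a * besselKernel 0 0 t - besselKernel 1 0 t + besselKernel 1 a t := by
  rw [integral_Ioi_hinge_mul ha, intervalIntegral.integral_eq_sub_of_hasDerivAt
    (fun z _ => hasDerivAt_hinge_primitive ht a z)
    (Continuous.intervalIntegrable (by fun_prop) _ _)]
  simp only [besselKernel, rpow_zero, rpow_one, zero_div, sub_zero, sub_self]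
  ring

lemma integrableOn_hinge_marginal (ha : 0 < a) :
    IntegrableOn (fun t => a * besselKernel 0 0 t - besselKernel 1 0 t + besselKernel 1 a t)
      (Ioi 0) :=
  (((integrableOn_besselKernel_zero_right (by norm_num)).const_mul a).sub
    (integrableOn_besselKernel_zero_right (by norm_num))).add (integrableOn_besselKernel ha 1)

lemma integral_hinge_marginal (ha : 0 < a) :
    ∫ t in Ioi (0 : ℝ), (a * besselKernel 0 0 t - besselKernel 1 0 t + besselKernel 1 a t)
      = a - 1 + B a + a * A a := by
  have hint₀ := (integrableOn_besselKernel_zero_right (ν := 0) (by norm_num)).const_mul a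
  have hint₁ := integrableOn_besselKernel_zero_right (ν := 1) (by norm_num)
  have hint₀₁ : IntegrableOn (fun t => a * besselKernel 0 0 t - besselKernel 1 0 t) (Ioi 0) :=
    hint₀.sub hint₁
  calc ∫ t in Ioi (0 : ℝ), (a * besselKernel 0 0 t - besselKernel 1 0 t + besselKernel 1 a t)
      = a * besselIntegral 0 0 - besselIntegral 1 0 + besselIntegral 1 a := by
        rw [integral_add hint₀₁ (integrableOn_besselKernel ha 1), integral_sub hint₀ hint₁,
          integral_const_mul]
        rfl
    _ = a - 1 + B a + a * A a := by
        rw [besselIntegral_zero_right (by norm_num), besselIntegral_zero_right (by norm_num),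
          besselIntegral_one_eq ha, zero_add, Gamma_one, one_add_one_eq_two, Gamma_two]
        ring

lemma integrable_uncurry_hinge (ha : 0 < a) :
    Integrable (Function.uncurry fun t z : ℝ => max (a - z) 0 * (t⁻¹ * exp (-t - z / t)))
      ((volume.restrict (Ioi 0)).prod (volume.restrict (Ioi 0))) := by
  have hmeas : Measurable
      (Function.uncurry fun t z : ℝ => max (a - z) 0 * (t⁻¹ * exp (-t - z / t))) := by
    unfold Function.uncurry
    fun_prop
  rw [integrable_prod_iff hmeas.aestronglyMeasurable]
  refine ⟨Eventually.of_forall fun t => ?_, ?_⟩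
  · have hcont : Continuous fun z => t⁻¹ * exp (-t - z / t) := by fun_prop
    exact integrableOn_hinge_mul hcont a 0
  · refine (integrableOn_hinge_marginal ha).congr_fun (fun t ht => ?_) measurableSet_Ioi
    have ht : 0 < t := ht
    refine (integral_hinge_mul_exp ha.le ht.ne').symm.trans ?_
    congr 1 with z
    exact (norm_of_nonneg (by positivity)).symm

lemma integrableOn_hinge_mul_A (ha : 0 < a) :
    IntegrableOn (fun z => max (a - z) 0 * A z) (Ioi 0) := by
  simpa only [Function.uncurry, A, IntegrableOn, integral_const_mul] using
    (integrable_uncurry_hinge ha).integral_prod_right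

lemma integral_hinge_mul_A (ha : 0 < a) :
    ∫ z in Ioi (0 : ℝ), max (a - z) 0 * A z = a - 1 + B a + a * A a := by
  calc ∫ z in Ioi (0 : ℝ), max (a - z) 0 * A z
      = ∫ z in Ioi (0 : ℝ), ∫ t in Ioi (0 : ℝ), max (a - z) 0 * (t⁻¹ * exp (-t - z / t)) := by
        simp only [integral_const_mul, A]
    _ = ∫ t in Ioi (0 : ℝ), ∫ z in Ioi (0 : ℝ), max (a - z) 0 * (t⁻¹ * exp (-t - z / t)) :=
        (integral_integral_swap (integrable_uncurry_hinge ha)).symm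
    _ = ∫ t in Ioi (0 : ℝ), (a * besselKernel 0 0 t - besselKernel 1 0 t + besselKernel 1 a t) :=
        setIntegral_congr_fun measurableSet_Ioi fun t ht =>
          integral_hinge_mul_exp ha.le (ne_of_gt ht)
    _ = a - 1 + B a + a * A a := integral_hinge_marginal ha

lemma hinge_comp_mul_left {φ : ℝ} (hφ : 0 < φ) (c z : ℝ) :
    max (c - φ * z) 0 = φ * max (c / φ - z) 0 := by
  rw [mul_max_of_nonneg _ _ hφ.le, mul_zero, mul_sub, mul_div_cancel₀ _ hφ.ne']

lemma integrableOn_hinge_comp_mul_left_mul_A {φ c : ℝ} (hφ : 0 < φ) (hc : 0 < c) :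
    IntegrableOn (fun z => max (c - φ * z) 0 * A z) (Ioi 0) := by
  simp only [hinge_comp_mul_left hφ, mul_assoc]
  exact (integrableOn_hinge_mul_A (div_pos hc hφ)).const_mul φ

lemma integral_hinge_comp_mul_left_mul_A {φ c : ℝ} (hφ : 0 < φ) (hc : 0 < c) :
    ∫ z in Ioi (0 : ℝ), max (c - φ * z) 0 * A z
      = c - φ + φ * B (c / φ) + c * A (c / φ) := by
  simp only [hinge_comp_mul_left hφ, mul_assoc]
  rw [integral_const_mul, integral_hinge_mul_A (div_pos hc hφ)]
  field_simp

end Hinge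

section Omega

variable {ψ θ ϱ ϑ : ℝ}

lemma slope_mul_half_width (hψ : ψ ≠ 0) : ψ / √(2 * π) * ((1 / ψ) * √(π / 2)) = 1 / 2 := by
  have hsqrt : √(2 * π) = 2 * √(π / 2) := by
    rw [show 2 * π = 2 ^ 2 * (π / 2) by ring, sqrt_mul (by norm_num), sqrt_sq (by norm_num)]
  have hne : √(π / 2) ≠ 0 := by positivity
  rw [hsqrt]
  field_simp

lemma Omega_eq_slope_mul_hinge_sub_hinge (hle : ϱ ≤ ϑ)
    (hleft : ψ / √(2 * π) * (ϱ - θ) = -(1 / 2)) (hright : ψ / √(2 * π) * (ϑ - θ) = 1 / 2) (γ : ℝ) :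
    Omega ψ θ ϱ ϑ γ = ψ / √(2 * π) * (max (ϑ - γ) 0 - max (ϱ - γ) 0) := by
  unfold Omega
  split_ifs with hγϱ hγϑ
  · rw [max_eq_left (by linarith), max_eq_left (by linarith)]
    linear_combination hleft - hright
  · rw [max_eq_left (by linarith), max_eq_right (by linarith)]
    linear_combination -hright
  · rw [max_eq_right (by linarith), max_eq_right (by linarith)]
    ring

end Omega

theorem stmt_16 (θ ψ φ ϱ ϑ : ℝ) (hψ : 0 < ψ) (hφ : 0 < φ)
    (hϱ : ϱ = θ - (1 / ψ) * Real.sqrt (π / 2))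
    (hϑ : ϑ = θ + (1 / ψ) * Real.sqrt (π / 2))
    (hϱpos : 0 < ϱ) :
    ∫ z in Set.Ioi (0 : ℝ), Omega ψ θ ϱ ϑ (φ * z) * A z
      = 1
        - (1 / 2) * (1 + (2 * ψ / Real.sqrt (2 * π)) * (ϱ + φ - θ)) * B (ϱ / φ)
        - (ψ * ϱ / Real.sqrt (2 * π)) * A (ϱ / φ)
        - (1 / 2) * (1 - (2 * ψ / Real.sqrt (2 * π)) * (ϑ + φ - θ)) * B (ϑ / φ)
        + (ψ * ϑ / Real.sqrt (2 * π)) * A (ϑ / φ) := by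
  have hhalf := slope_mul_half_width hψ.ne'
  have hleft : ψ / √(2 * π) * (ϱ - θ) = -(1 / 2) := by rw [hϱ]; linear_combination -hhalf
  have hright : ψ / √(2 * π) * (ϑ - θ) = 1 / 2 := by rw [hϑ]; linear_combination hhalf
  have hle : ϱ ≤ ϑ := by
    have hwidth : 0 < (1 / ψ) * √(π / 2) := by positivity
    linarith
  have hϑpos : 0 < ϑ := hϱpos.trans_le hle
  simp only [Omega_eq_slope_mul_hinge_sub_hinge hle hleft hright, mul_assoc, sub_mul]
  rw [integral_const_mul, integral_sub (integrableOn_hinge_comp_mul_left_mul_A hφ hϑpos)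
    (integrableOn_hinge_comp_mul_left_mul_A hφ hϱpos),
    integral_hinge_comp_mul_left_mul_A hφ hϑpos, integral_hinge_comp_mul_left_mul_A hφ hϱpos]
  linear_combination (1 - B (ϑ / φ)) * hright - (1 - B (ϱ / φ)) * hleft
end
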